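/- (Part of Lemma 3.13.) The infinite-dimensional sphere is homeomorphic to its own square: the unit sphere S^∞ of the real Hilbert space ℓ²(ℕ) satisfies S^∞ × S^∞ ≅ S^∞, i.e., there is a homeomorphism between S^∞ × S^∞ (with the product topology) and S^∞. -/

import Mathlib

/-!
It is enough to prove `S^∞ ≅ ℓ²`, since `ℓ² × ℓ² ≅ ℓ²`: all infinite-dimensional separable real
Hilbert spaces are isometric. Stereographic projection identifies `S^∞` minus a point with a closed
hyperplane, which is again such a space. What remains is that deleting a point does not change
the homeomorphism type of `S^∞`; this is Bessaga's method of incomplete norms.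

Write `s = x 0`, and let `wn x = sup_{n ≥ 1} |x n| / n`, a seminorm that is continuous on `ℓ²` and
vanishes only on the line of the zeroth basis vector. For `r > 0` let `path s r` be the finitely
supported sequence `max 0 (s - n r) / 2` (`n ≥ 1`); as `r → 0` with `s > 0` it leaves `ℓ²`, although
it converges for `wn`. The map `push x = x + path s (wn x)` is a homeomorphism from `ℓ²` minus the
closed ray through the zeroth basis vector onto `ℓ² \ {0}`. Indeed `push x = y` says that
`x = y - path s r`, where `r = wn x` solves `r = wn (y - path s r)`. The right-hand side is a
`1/2`-contraction in `r` (defined also at `r = 0`, where the argument is merely bounded), so `r`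
exists, is unique, and is Lipschitz in `y`; it is not `0` when `s > 0`, because a nonzero constant
sequence is not square-summable. As `push` is positively homogeneous, it induces a homeomorphism of
the spaces of unit vectors, from `S^∞` minus a point onto `S^∞`.
-/

/-- The real Hilbert space `ℓ²(ℕ)` of square-summable real sequences. -/
noncomputable abbrev L2R : Type := lp (fun _ : ℕ => ℝ) 2

/-- The infinite-dimensional sphere `S^∞`, the unit sphere of `ℓ²(ℕ)`. -/
noncomputable abbrev InfSphere : Set L2R := Metric.sphere (0 : L2R) 1

open Set Filter Topology
open scoped RealInnerProductSpace

/-! ### Separable Hilbert spaces -/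

lemma separableSpace_L2R : TopologicalSpace.SeparableSpace L2R := by
  have b : HilbertBasis ℕ ℝ L2R := ⟨LinearIsometryEquiv.refl ℝ _⟩
  have h1 : TopologicalSpace.IsSeparable
      (closure (Submodule.span ℝ (range b) : Set L2R)) :=
    ((countable_range b).isSeparable.span (R := ℝ)).closure
  have h2 : closure (Submodule.span ℝ (range b) : Set L2R) = univ := by
    have := b.dense_span
    rw [← Submodule.topologicalClosure_coe, this]; rfl
  rw [h2] at h1
  exact TopologicalSpace.isSeparable_univ_iff.1 h1

/-- An orthonormal family is `1`-separated, hence countable in a separable space. -/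
lemma countable_of_orthonormal {G ι : Type*} [NormedAddCommGroup G] [InnerProductSpace ℝ G]
    [TopologicalSpace.SeparableSpace G] {v : ι → G} (hv : Orthonormal ℝ v) : Countable ι := by
  have hsep : ∀ i j, i ≠ j → 1 ≤ ‖v i - v j‖ := by
    intro i j hij
    have h := norm_sub_sq_real (v i) (v j)
    rw [hv.1 i, hv.1 j, hv.2 hij] at h
    nlinarith [norm_nonneg (v i - v j)]
  rw [← countable_univ_iff]
  refine PairwiseDisjoint.countable_of_isOpen (s := fun i => Metric.ball (v i) (1 / 2)) ?_
    (fun i _ => Metric.isOpen_ball) (fun i _ => ⟨v i, by simp⟩)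
  intro i _ j _ hij
  apply Metric.ball_disjoint_ball
  rw [dist_eq_norm]
  linarith [hsep i j hij]

lemma homeomorph_L2R_of_not_finiteDimensional (G : Type*) [NormedAddCommGroup G]
    [InnerProductSpace ℝ G] [CompleteSpace G] [TopologicalSpace.SeparableSpace G]
    (hG : ¬ FiniteDimensional ℝ G) : Nonempty (G ≃ₜ L2R) := by
  obtain ⟨w, b, -⟩ := exists_hilbertBasis ℝ G
  have : Countable w := countable_of_orthonormal b.orthonormal
  have : Infinite w := by
    by_contra hw
    rw [not_infinite_iff_finite] at hw
    have := Fintype.ofFinite w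
    exact hG b.toOrthonormalBasis.toBasis.finiteDimensional_of_finite
  obtain ⟨e⟩ : Nonempty (ℕ ≃ w) := by
    obtain ⟨_⟩ := nonempty_denumerable w
    exact ⟨(Denumerable.eqv w).symm⟩
  have b' : HilbertBasis ℕ ℝ G := HilbertBasis.mk (b.orthonormal.comp e e.injective) (by
    rw [EquivLike.range_comp, b.dense_span])
  exact ⟨b'.repr.toHomeomorph⟩

lemma not_finiteDimensional_L2R : ¬ FiniteDimensional ℝ L2R := by
  intro h
  have b : HilbertBasis ℕ ℝ L2R := ⟨LinearIsometryEquiv.refl ℝ _⟩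
  have := b.orthonormal.linearIndependent.finite
  exact not_finite ℕ

lemma L2R_prod_homeomorph : Nonempty ((L2R × L2R) ≃ₜ L2R) := by
  have := separableSpace_L2R
  have : TopologicalSpace.SeparableSpace (WithLp 2 (L2R × L2R)) :=
    (WithLp.homeomorphProd 2 L2R L2R).symm.surjective.denseRange.separableSpace
      (WithLp.homeomorphProd 2 L2R L2R).symm.continuous
  obtain ⟨e⟩ := homeomorph_L2R_of_not_finiteDimensional (WithLp 2 (L2R × L2R)) (by
    intro h
    have : FiniteDimensional ℝ (L2R × L2R) :=
      (WithLp.prodContinuousLinearEquiv 2 ℝ L2R L2R).toLinearEquiv.finiteDimensional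
    exact not_finiteDimensional_L2R
      (Module.Finite.of_surjective (LinearMap.fst ℝ L2R L2R) LinearMap.fst_surjective))
  exact ⟨(WithLp.homeomorphProd 2 L2R L2R).symm.trans e⟩

lemma sphere_compl_homeomorph (v : InfSphere) :
    Nonempty ((({v}ᶜ : Set InfSphere)) ≃ₜ L2R) := by
  have := separableSpace_L2R
  have hv : ‖(v : L2R)‖ = 1 := norm_eq_of_mem_sphere v
  obtain ⟨e⟩ := homeomorph_L2R_of_not_finiteDimensional ((ℝ ∙ (v : L2R))ᗮ : Submodule ℝ L2R) (by
    intro h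
    have h2 : FiniteDimensional ℝ ((ℝ ∙ (v : L2R)) ⊔ (ℝ ∙ (v : L2R))ᗮ : Submodule ℝ L2R) :=
      Submodule.finiteDimensional_sup _ _
    rw [Submodule.sup_orthogonal_of_hasOrthogonalProjection] at h2
    exact not_finiteDimensional_L2R (Module.finite_def.2 (Module.Finite.iff_fg.1 h2)))
  let f := stereographic hv
  exact ⟨((Homeomorph.setCongr (by rw [stereographic_source])).trans
    f.toHomeomorphSourceTarget).trans
    ((Homeomorph.setCongr (stereographic_target hv)).trans
      ((Homeomorph.Set.univ _).trans e))⟩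

/-! ### The weak norm and the escaping path -/

/-- The weak norm `sup_{n ≥ 1} |a n| / n` of a bounded sequence. The coordinate `n = 0` does not
contribute, because `|a 0| / 0 = 0`. -/
noncomputable def wn (a : ℕ → ℝ) : ℝ := ⨆ n : ℕ, |a n| / n

/-- The sequence equal to `0` at `n = 0` and to `max 0 (s - n |r|) / 2` at `n ≥ 1`. It is finitely
supported if `r ≠ 0` or `s ≤ 0`, and is not in `ℓ²` if `r = 0 < s`. -/
noncomputable def path (s r : ℝ) (n : ℕ) : ℝ := if n = 0 then 0 else max 0 (s - n * |r|) / 2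

/-- The parameters `(s, r)` at which `path` is locally uniformly finitely supported. -/
def good : Set (ℝ × ℝ) := {q | q.2 ≠ 0 ∨ q.1 < 0}

/-- The vector of `ℓ²` with coordinates `path s r`, cut off at an index beyond which `path s r`
vanishes whenever `(s, r) ∈ good`. -/
noncomputable def pathVec (s r : ℝ) : L2R :=
  ∑ n ∈ Finset.range ⌈s / |r|⌉₊, lp.single 2 n (path s r n)

lemma wn_nonneg (a : ℕ → ℝ) : 0 ≤ wn a := Real.iSup_nonneg fun n => by positivity

lemma bddAbove_wn {a : ℕ → ℝ} {C : ℝ} (h : ∀ n, |a n| ≤ C) :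
    BddAbove (range fun n : ℕ => |a n| / n) := by
  refine ⟨C, ?_⟩
  rintro _ ⟨n, rfl⟩
  have hC : 0 ≤ C := (abs_nonneg _).trans (h n)
  rcases Nat.eq_zero_or_pos n with rfl | hn
  · simpa using hC
  · have : (1 : ℝ) ≤ n := by exact_mod_cast hn
    exact (div_le_self (abs_nonneg _) this).trans (h n)

lemma abs_le_wn {a : ℕ → ℝ} {C : ℝ} (h : ∀ n, |a n| ≤ C) {n : ℕ} (hn : n ≠ 0) :
    |a n| ≤ wn a * n := by
  have : (0 : ℝ) < n := by positivity
  rw [← div_le_iff₀ this]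
  exact le_ciSup (bddAbove_wn h) n

lemma wn_le {a : ℕ → ℝ} {c : ℝ} (hc : 0 ≤ c) (h : ∀ n, n ≠ 0 → |a n| ≤ c * n) : wn a ≤ c := by
  refine ciSup_le fun n => ?_
  rcases eq_or_ne n 0 with rfl | hn
  · simpa using hc
  · have : (0 : ℝ) < n := by positivity
    rw [div_le_iff₀ this]
    exact h n hn

lemma wn_congr {a b : ℕ → ℝ} (h : ∀ n, n ≠ 0 → a n = b n) : wn a = wn b := by
  refine iSup_congr fun n => ?_
  rcases eq_or_ne n 0 with rfl | hn
  · simp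
  · rw [h n hn]

lemma abs_wn_sub_le {a b : ℕ → ℝ} {A B c : ℝ} (ha : ∀ n, |a n| ≤ A) (hb : ∀ n, |b n| ≤ B)
    (hc : 0 ≤ c) (h : ∀ n, n ≠ 0 → |a n - b n| ≤ c * n) : |wn a - wn b| ≤ c := by
  have h1 : wn a ≤ wn b + c := wn_le (add_nonneg (wn_nonneg b) hc) fun n hn => by
    have h2 := abs_le_wn hb hn
    have h3 := abs_add_le (a n - b n) (b n)
    rw [sub_add_cancel] at h3
    linarith [h n hn]
  have h1' : wn b ≤ wn a + c := wn_le (add_nonneg (wn_nonneg a) hc) fun n hn => by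
    have h2 := abs_le_wn ha hn
    have h3 := abs_sub (a n) (a n - b n)
    rw [sub_sub_cancel] at h3
    linarith [h n hn]
  rw [abs_le]; constructor <;> linarith

lemma wn_smul (c : ℝ) (hc : 0 ≤ c) (a : ℕ → ℝ) : wn (fun n => c * a n) = c * wn a := by
  unfold wn
  rw [Real.mul_iSup_of_nonneg hc]
  simp only [abs_mul, abs_of_nonneg hc, mul_div_assoc]

lemma abs_coord_le (x : L2R) (n : ℕ) : |x n| ≤ ‖x‖ := lp.norm_apply_le_norm (by norm_num) x n

@[simp] lemma path_zero (s r : ℝ) : path s r 0 = 0 := by simp [path]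

lemma path_eq_zero {s r : ℝ} {n : ℕ} (h : s ≤ n * |r|) : path s r n = 0 := by
  unfold path
  split_ifs
  · rfl
  · rw [max_eq_left (by linarith)]; simp

lemma abs_path_sub_le (s r s' r' : ℝ) (n : ℕ) :
    |path s r n - path s' r' n| ≤ (|s - s'| + n * |r - r'|) / 2 := by
  unfold path
  split_ifs
  · simp; positivity
  · have h := abs_max_sub_max_le_abs (s - n * |r|) (s' - n * |r'|) 0
    rw [max_comm _ 0, max_comm _ 0] at h
    have h1 : |(s - n * |r|) - (s' - n * |r'|)| ≤ |s - s'| + n * |r - r'| := by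
      have h2 : (s - n * |r|) - (s' - n * |r'|) = (s - s') - n * (|r| - |r'|) := by ring
      rw [h2]
      refine (abs_sub _ _).trans ?_
      rw [abs_mul, Nat.abs_cast]
      have h3 := mul_le_mul_of_nonneg_left (abs_abs_sub_abs_le r r') (Nat.cast_nonneg (α := ℝ) n)
      linarith
    rw [← sub_div, abs_div, abs_two]
    linarith

lemma abs_path_le (s r : ℝ) (n : ℕ) : |path s r n| ≤ |s| := by
  unfold path
  split_ifs
  · simp
  · rw [abs_of_nonneg (by positivity)]
    have : max 0 (s - n * |r|) ≤ |s| :=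
      max_le (abs_nonneg s) (by linarith [le_abs_self s, show 0 ≤ n * |r| by positivity])
    linarith [abs_nonneg s]

lemma path_smul {c : ℝ} (hc : 0 ≤ c) (s r : ℝ) (n : ℕ) :
    path (c * s) (c * r) n = c * path s r n := by
  unfold path
  split_ifs
  · simp
  · have h : max 0 (c * s - n * |c * r|) = c * max 0 (s - n * |r|) := by
      rw [mul_max_of_nonneg _ _ hc, abs_mul, abs_of_nonneg hc]
      congr 1 <;> ring
    rw [h]; ring

lemma sum_single_apply (N : ℕ) (a : ℕ → ℝ) (ha : ∀ n, N ≤ n → a n = 0) (m : ℕ) :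
    (∑ n ∈ Finset.range N, lp.single 2 n (a n) : L2R) m = a m := by
  rw [lp.coeFn_sum, Finset.sum_apply]
  simp only [lp.single_apply, Pi.single_apply]
  rw [Finset.sum_ite_eq]
  split_ifs with h
  · rfl
  · rw [ha m (by simpa using h)]

lemma path_eq_zero_of_ceil_le {s r : ℝ} (h : (s, r) ∈ good) (n : ℕ) (hn : ⌈s / |r|⌉₊ ≤ n) :
    path s r n = 0 := by
  apply path_eq_zero
  by_cases hr : r = 0
  · have : s < 0 := h.resolve_left (not_not.2 hr)
    simp [hr]; exact this.le
  · have : 0 < |r| := abs_pos.2 hr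
    rw [← div_le_iff₀ this]
    exact Nat.ceil_le.1 hn

lemma pathVec_apply {s r : ℝ} (h : (s, r) ∈ good) (n : ℕ) : pathVec s r n = path s r n :=
  sum_single_apply _ _ (path_eq_zero_of_ceil_le h) n

/-- Near a point of `good`, all the sequences `path s r` vanish beyond one common index, and
`pathVec` is a finite sum of continuous terms. -/
lemma continuousOn_pathVec : ContinuousOn (fun q : ℝ × ℝ => pathVec q.1 q.2) good := by
  rintro ⟨s₀, r₀⟩ h₀
  obtain ⟨N, hN⟩ : ∃ N : ℕ, ∀ᶠ q : ℝ × ℝ in 𝓝 (s₀, r₀), q.1 ≤ N * |q.2| := by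
    by_cases hr : r₀ = 0
    · have hs : s₀ < 0 := h₀.resolve_left (not_not.2 hr)
      refine ⟨0, ?_⟩
      have : ∀ᶠ q : ℝ × ℝ in 𝓝 (s₀, r₀), q.1 < 0 :=
        continuous_fst.continuousAt.eventually_lt continuousAt_const hs
      filter_upwards [this] with q hq
      simpa using hq.le
    · have hr' : 0 < |r₀| := abs_pos.2 hr
      obtain ⟨N, hN⟩ := exists_nat_gt (s₀ / |r₀|)
      rw [div_lt_iff₀ hr'] at hN
      refine ⟨N, ?_⟩
      have : ∀ᶠ q : ℝ × ℝ in 𝓝 (s₀, r₀), q.1 < N * |q.2| :=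
        continuous_fst.continuousAt.eventually_lt
          (by fun_prop : Continuous fun q : ℝ × ℝ => (N : ℝ) * |q.2|).continuousAt hN
      filter_upwards [this] with q hq using hq.le
  have hcont : Continuous fun q : ℝ × ℝ =>
      (∑ n ∈ Finset.range N, lp.single 2 n (path q.1 q.2 n) : L2R) := by
    refine continuous_finsetSum _ fun n _ => ?_
    have h1 : Continuous fun q : ℝ × ℝ => path q.1 q.2 n := by
      unfold path
      split_ifs <;> fun_prop
    exact (lp.isometry_single (E := fun _ : ℕ => ℝ) (p := 2) n).continuous.comp h1
  refine hcont.continuousWithinAt.congr_of_eventuallyEq_of_mem ?_ h₀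
  filter_upwards [self_mem_nhdsWithin, mem_nhdsWithin_of_mem_nhds hN] with q hq hqN
  ext m
  rw [pathVec_apply hq, sum_single_apply]
  intro n hn
  refine path_eq_zero (hqN.trans ?_)
  gcongr

/-! ### The fixed point radius -/

/-- The self-map of `ℝ` whose fixed point is the weak norm of the preimage of `y`. -/
noncomputable def radMap (y : L2R) (r : ℝ) : ℝ := wn fun n => y n - path (y 0) r n

lemma abs_radMap_sub_le (y y' : L2R) (r r' : ℝ) :
    |radMap y r - radMap y' r'| ≤ 3 / 2 * ‖y - y'‖ + |r - r'| / 2 := by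
  have hb : ∀ (z : L2R) (t : ℝ) (n : ℕ), |z n - path (z 0) t n| ≤ ‖z‖ + ‖z‖ := fun z t n =>
    (abs_sub _ _).trans (add_le_add (abs_coord_le z n)
      ((abs_path_le _ _ _).trans (abs_coord_le z 0)))
  refine abs_wn_sub_le (hb y r) (hb y' r') (by positivity) fun n hn => ?_
  have h1 : (1 : ℝ) ≤ n := by exact_mod_cast Nat.one_le_iff_ne_zero.2 hn
  have h2 : |y n - y' n| ≤ ‖y - y'‖ := by simpa using abs_coord_le (y - y') n
  have h3 : |y 0 - y' 0| ≤ ‖y - y'‖ := by simpa using abs_coord_le (y - y') 0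
  have h4 := abs_path_sub_le (y 0) r (y' 0) r' n
  have h5 : |(y n - path (y 0) r n) - (y' n - path (y' 0) r' n)|
      ≤ |y n - y' n| + |path (y 0) r n - path (y' 0) r' n| := by
    rw [sub_sub_sub_comm]; exact abs_sub _ _
  have h6 : ‖y - y'‖ ≤ ‖y - y'‖ * n := le_mul_of_one_le_right (norm_nonneg _) h1
  nlinarith

lemma exists_rad (y : L2R) : ∃ r, radMap y r = r := by
  have : ContractingWith (1 / 2) (radMap y) := by
    refine ⟨by rw [← NNReal.coe_lt_coe]; norm_num, LipschitzWith.of_dist_le_mul fun r r' => ?_⟩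
    have := abs_radMap_sub_le y y r r'
    simp only [sub_self, norm_zero] at this
    rw [Real.dist_eq, Real.dist_eq]
    push_cast
    linarith
  exact ⟨_, this.fixedPoint_isFixedPt⟩

/-- The unique fixed point of `radMap y`. -/
noncomputable def rad (y : L2R) : ℝ := (exists_rad y).choose

lemma radMap_rad (y : L2R) : radMap y (rad y) = rad y := (exists_rad y).choose_spec

lemma abs_fixed_sub_le {y y' : L2R} {r r' : ℝ} (h : radMap y r = r) (h' : radMap y' r' = r') :
    |r - r'| ≤ 3 * ‖y - y'‖ := by
  have := abs_radMap_sub_le y y' r r'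
  rw [h, h'] at this
  linarith

lemma rad_eq {y : L2R} {r : ℝ} (h : radMap y r = r) : rad y = r := by
  have := abs_fixed_sub_le (radMap_rad y) h
  simp only [sub_self, norm_zero, mul_zero] at this
  exact sub_eq_zero.1 (abs_nonpos_iff.1 this)

lemma continuous_rad : Continuous rad :=
  (LipschitzWith.of_dist_le_mul (K := 3) fun y y' => by
    rw [Real.dist_eq, dist_eq_norm]
    exact abs_fixed_sub_le (radMap_rad y) (radMap_rad y')).continuous

lemma continuous_wn : Continuous fun x : L2R => wn x :=
  (LipschitzWith.of_dist_le_mul (K := 1) fun x y => by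
    rw [Real.dist_eq, dist_eq_norm, NNReal.coe_one, one_mul]
    refine abs_wn_sub_le (abs_coord_le x) (abs_coord_le y) (norm_nonneg _) fun n hn => ?_
    have h1 : (1 : ℝ) ≤ n := by exact_mod_cast Nat.one_le_iff_ne_zero.2 hn
    have h2 : |x n - y n| ≤ ‖x - y‖ := by simpa using abs_coord_le (x - y) n
    exact h2.trans (le_mul_of_one_le_right (norm_nonneg _) h1)).continuous

lemma continuous_coord (n : ℕ) : Continuous fun x : L2R => x n :=
  (LipschitzWith.of_dist_le_mul (K := 1) fun x y => by
    rw [Real.dist_eq, dist_eq_norm, NNReal.coe_one, one_mul]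
    simpa using abs_coord_le (x - y) n).continuous

/-! ### Deleting a ray -/

/-- `ℓ²` with the closed ray spanned by the zeroth basis vector deleted, in the form in which
membership is used: `wn x` vanishes exactly on the line through that vector. -/
def slit : Set L2R := {x | (x 0, wn x) ∈ good}

/-- The homeomorphism from `slit` onto the complement of the origin. -/
noncomputable def push (x : L2R) : L2R := x + pathVec (x 0) (wn x)

/-- The inverse of `push`. -/
noncomputable def pull (y : L2R) : L2R := y - pathVec (y 0) (rad y)

lemma coord_eq_zero_of_wn {x : L2R} (h : wn x = 0) {n : ℕ} (hn : n ≠ 0) : x n = 0 := by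
  have := abs_le_wn (abs_coord_le x) hn
  rw [h, zero_mul] at this
  exact abs_nonpos_iff.1 this

/-- If `rad y = 0`, then all coordinates of `y` but the zeroth equal `max 0 (y 0) / 2`; since they
are square-summable, `y 0 ≤ 0`. -/
lemma good_of_ne_zero {y : L2R} (hy : y ≠ 0) : (y 0, rad y) ∈ good := by
  by_contra hg
  have h0 : rad y = 0 := by by_contra h; exact hg (Or.inl h)
  have hs : 0 ≤ y 0 := by by_contra h; exact hg (Or.inr (not_le.1 h))
  have hfix := radMap_rad y
  rw [h0] at hfix
  have hn : ∀ n, n ≠ 0 → y n = y 0 / 2 := by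
    intro n hn
    have hb : ∀ n, |y n - path (y 0) 0 n| ≤ ‖y‖ + ‖y‖ := fun n =>
      (abs_sub _ _).trans (add_le_add (abs_coord_le y n)
        ((abs_path_le _ _ _).trans (abs_coord_le y 0)))
    have h1 := abs_le_wn hb hn
    change _ ≤ radMap y 0 * n at h1
    rw [hfix, zero_mul] at h1
    have h2 := sub_eq_zero.1 (abs_nonpos_iff.1 h1)
    rw [h2, path, if_neg hn]
    simp [hs]
  have hsum : Summable fun n => y n * y n := by
    exact lp.summable_inner (𝕜 := ℝ) y y
  have hlim : Tendsto (fun n => y n * y n) atTop (𝓝 (y 0 / 2 * (y 0 / 2))) := by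
    refine tendsto_const_nhds.congr' ?_
    filter_upwards [eventually_ne_atTop 0] with n h
    rw [hn n h]
  have hz : y 0 = 0 := by
    have := tendsto_nhds_unique hlim hsum.tendsto_atTop_zero
    simpa using this
  apply hy
  ext n
  rcases eq_or_ne n 0 with rfl | h
  · simpa using hz
  · simp [hn n h, hz]

lemma push_apply {x : L2R} (hx : x ∈ slit) (n : ℕ) : push x n = x n + path (x 0) (wn x) n := by
  rw [push, lp.coeFn_add, Pi.add_apply, pathVec_apply hx]

lemma pull_apply {y : L2R} (hy : y ≠ 0) (n : ℕ) : pull y n = y n - path (y 0) (rad y) n := by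
  rw [pull, lp.coeFn_sub, Pi.sub_apply, pathVec_apply (good_of_ne_zero hy)]

lemma push_ne_zero {x : L2R} (hx : x ∈ slit) : push x ≠ 0 := by
  intro h
  have hc : ∀ n, x n + path (x 0) (wn x) n = 0 := fun n => by rw [← push_apply hx, h]; rfl
  have h0 : x 0 = 0 := by simpa using hc 0
  have hw : wn x = 0 := by
    refine le_antisymm (wn_le le_rfl fun n _ => ?_) (wn_nonneg _)
    have h1 := hc n
    rw [path_eq_zero (by rw [h0]; positivity), add_zero] at h1
    simp [h1]
  rcases hx with h1 | h1
  · exact h1 hw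
  · exact h1.ne h0

lemma wn_pull {y : L2R} (hy : y ≠ 0) : wn (pull y) = rad y := by
  rw [wn_congr fun n _ => pull_apply hy n]
  exact radMap_rad y

lemma pull_zero_coord {y : L2R} (hy : y ≠ 0) : pull y 0 = y 0 := by simp [pull_apply hy]

lemma pull_mem {y : L2R} (hy : y ≠ 0) : pull y ∈ slit := by
  change (pull y 0, wn (pull y)) ∈ good
  rw [wn_pull hy, pull_zero_coord hy]
  exact good_of_ne_zero hy

lemma push_pull {y : L2R} (hy : y ≠ 0) : push (pull y) = y := by
  rw [push, wn_pull hy, pull_zero_coord hy, pull, sub_add_cancel]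

lemma pull_push {x : L2R} (hx : x ∈ slit) : pull (push x) = x := by
  have h0 : push x 0 = x 0 := by simp [push_apply hx]
  have hr : rad (push x) = wn x := by
    apply rad_eq
    refine wn_congr fun n _ => ?_
    rw [h0, push_apply hx, add_sub_cancel_right]
  rw [pull, h0, hr, push, add_sub_cancel_right]

lemma wn_smul_vec {c : ℝ} (hc : 0 < c) (x : L2R) : wn (c • x : L2R) = c * wn x := by
  rw [← wn_smul c hc.le]
  exact wn_congr fun n _ => by simp

lemma smul_mem_slit {c : ℝ} (hc : 0 < c) {x : L2R} (hx : x ∈ slit) : c • x ∈ slit := by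
  change ((c • x : L2R) 0, wn (c • x : L2R)) ∈ good
  rw [wn_smul_vec hc]
  rcases hx with h | h
  · exact Or.inl (mul_ne_zero hc.ne' h)
  · exact Or.inr (by simpa using mul_neg_of_pos_of_neg hc h)

lemma push_smul {c : ℝ} (hc : 0 < c) {x : L2R} (hx : x ∈ slit) : push (c • x) = c • push x := by
  ext n
  rw [push_apply (smul_mem_slit hc hx), wn_smul_vec hc]
  have h0 : (c • x : L2R) 0 = c * x 0 := by simp
  rw [h0, path_smul hc.le, lp.coeFn_smul, lp.coeFn_smul, Pi.smul_apply, Pi.smul_apply,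
    push_apply hx]
  simp [mul_add]

lemma pull_smul {c : ℝ} (hc : 0 < c) {y : L2R} (hy : y ≠ 0) : pull (c • y) = c • pull y := by
  conv_lhs => rw [← push_pull hy]
  rw [← push_smul hc (pull_mem hy), pull_push (smul_mem_slit hc (pull_mem hy))]

lemma continuousOn_push : ContinuousOn push slit := by
  have h : ContinuousOn (fun x : L2R => (x 0, wn x)) slit :=
    ((continuous_coord 0).prodMk continuous_wn).continuousOn
  have h2 : ContinuousOn (fun x : L2R => pathVec (x 0) (wn x)) slit :=
    ContinuousOn.comp (f := fun x : L2R => (x 0, wn x)) continuousOn_pathVec h fun _ hx => hx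
  have h3 : ContinuousOn (fun x : L2R => x) slit := continuousOn_id
  unfold push
  exact h3.add h2

lemma continuousOn_pull : ContinuousOn pull {0}ᶜ := by
  have h : ContinuousOn (fun y : L2R => (y 0, rad y)) {0}ᶜ :=
    ((continuous_coord 0).prodMk continuous_rad).continuousOn
  have h2 : ContinuousOn (fun y : L2R => pathVec (y 0) (rad y)) {0}ᶜ :=
    ContinuousOn.comp (f := fun y : L2R => (y 0, rad y)) continuousOn_pathVec h
      fun _ hy => good_of_ne_zero hy
  have h3 : ContinuousOn (fun y : L2R => y) {0}ᶜ := continuousOn_id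
  unfold pull
  exact h3.sub h2

/-! ### The punctured sphere -/

/-- The radial projection onto the unit sphere. -/
noncomputable def nrm (x : L2R) : L2R := ‖x‖⁻¹ • x

lemma nrm_mem {x : L2R} (hx : x ≠ 0) : nrm x ∈ InfSphere := by
  rw [mem_sphere_zero_iff_norm, nrm]
  exact norm_smul_inv_norm (𝕜 := ℝ) hx

lemma nrm_smul {c : ℝ} (hc : 0 < c) (x : L2R) : nrm (c • x) = nrm x := by
  rw [nrm, nrm, norm_smul, Real.norm_of_nonneg hc.le, smul_smul]
  congr 1
  field_simp

lemma nrm_self {x : L2R} (hx : x ∈ InfSphere) : nrm x = x := by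
  rw [nrm, mem_sphere_zero_iff_norm.1 hx, inv_one, one_smul]

lemma continuousOn_nrm : ContinuousOn nrm {0}ᶜ :=
  (continuousOn_id.norm.inv₀ fun _ hx => norm_ne_zero_iff.2 hx).smul continuousOn_id

lemma ne_zero_of_mem_slit {x : L2R} (hx : x ∈ slit) : x ≠ 0 := by
  rintro rfl
  rcases hx with h | h
  · exact h (by simp [wn])
  · simp at h

/-- The zeroth basis vector. -/
noncomputable def pole : InfSphere :=
  ⟨lp.single 2 0 (1 : ℝ), by rw [mem_sphere_zero_iff_norm, lp.norm_single (by norm_num)]; simp⟩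

lemma pole_notMem_slit : (pole : L2R) ∉ slit := by
  have h0 : (pole : L2R) 0 = 1 := by simp [pole]
  have hw : wn (pole : L2R) = 0 := by
    refine le_antisymm (wn_le le_rfl fun n hn => ?_) (wn_nonneg _)
    simp [pole, hn]
  rintro (h | h)
  · exact h hw
  · change (pole : L2R) 0 < 0 at h
    rw [h0] at h; norm_num at h

lemma mem_slit_of_ne_pole {x : InfSphere} (hx : x ≠ pole) : (x : L2R) ∈ slit := by
  by_contra hg
  have hw : wn (x : L2R) = 0 := by by_contra h; exact hg (Or.inl h)
  have hs : 0 ≤ (x : L2R) 0 := by by_contra h; exact hg (Or.inr (not_le.1 h))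
  have hxs : (x : L2R) = lp.single 2 0 ((x : L2R) 0) := by
    ext n
    rcases eq_or_ne n 0 with rfl | hn
    · simp
    · simp [coord_eq_zero_of_wn hw hn, hn]
  have hnorm : ‖(x : L2R)‖ = 1 := norm_eq_of_mem_sphere x
  rw [hxs, lp.norm_single (by norm_num), Real.norm_of_nonneg hs] at hnorm
  apply hx
  ext1
  rw [hxs, hnorm]
  rfl

/-- `push` and `pull` are positively homogeneous, so they act on the unit vectors of the rays. -/
noncomputable def puncturedSphereHomeomorph : (({pole}ᶜ : Set InfSphere)) ≃ₜ InfSphere where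
  toFun x := ⟨nrm (push x.1.1), nrm_mem (push_ne_zero (mem_slit_of_ne_pole x.2))⟩
  invFun y := ⟨⟨nrm (pull y.1),
      nrm_mem (ne_zero_of_mem_slit (pull_mem (ne_zero_of_mem_unit_sphere y)))⟩, by
    have hy := pull_mem (ne_zero_of_mem_unit_sphere y)
    have hy0 := norm_pos_iff.2 (ne_zero_of_mem_slit hy)
    intro h
    rw [mem_singleton_iff] at h
    apply pole_notMem_slit
    rw [← h]
    exact smul_mem_slit (inv_pos.2 hy0) hy⟩
  left_inv x := by
    have hx := mem_slit_of_ne_pole x.2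
    have hp := push_ne_zero hx
    ext1; ext1
    change nrm (pull (nrm (push x.1.1))) = x.1.1
    rw [nrm.eq_1 (push _), pull_smul (inv_pos.2 (norm_pos_iff.2 hp)) hp,
      nrm_smul (inv_pos.2 (norm_pos_iff.2 hp)), pull_push hx, nrm_self x.1.2]
  right_inv y := by
    have hy := ne_zero_of_mem_unit_sphere y
    have hp := pull_mem hy
    have hc := inv_pos.2 (norm_pos_iff.2 (ne_zero_of_mem_slit hp))
    ext1
    change nrm (push (nrm (pull y.1))) = y.1
    rw [nrm.eq_1 (pull _), push_smul hc hp, nrm_smul hc, push_pull hy, nrm_self y.2]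
  continuous_toFun := by
    refine Continuous.subtype_mk ?_ _
    refine continuousOn_nrm.comp_continuous ?_
      fun x => push_ne_zero (mem_slit_of_ne_pole x.2)
    exact continuousOn_push.comp_continuous (by fun_prop) fun x => mem_slit_of_ne_pole x.2
  continuous_invFun := by
    refine Continuous.subtype_mk (Continuous.subtype_mk ?_ _) _
    refine continuousOn_nrm.comp_continuous ?_
      fun y => ne_zero_of_mem_slit (pull_mem (ne_zero_of_mem_unit_sphere y))
    exact continuousOn_pull.comp_continuous (by fun_prop)
      fun y => ne_zero_of_mem_unit_sphere y

/-- The infinite-dimensional sphere is homeomorphic to its own square: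
`S^∞ × S^∞ ≅ S^∞`. -/
theorem infSphere_prod_self_homeomorph :
    Nonempty ((InfSphere × InfSphere) ≃ₜ InfSphere) := by
  obtain ⟨e⟩ := sphere_compl_homeomorph pole
  obtain ⟨f⟩ := L2R_prod_homeomorph
  let g : InfSphere ≃ₜ L2R := puncturedSphereHomeomorph.symm.trans e
  exact ⟨((g.prodCongr g).trans f).trans g.symm⟩
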